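/- Let L be a finite-dimensional real Lie algebra with nondegenerate Killing form κ, and let θ : L → L be a Lie algebra involution (a Lie algebra automorphism with θ ∘ θ = id) such that the bilinear form (x, y) ↦ −κ(x, θ(y)) is positive definite (a Cartan involution). Let 𝔨 = {x ∈ L : θ(x) = x} be the fixed subalgebra. Assume the Killing form of 𝔨 is nondegenerate (the non-Hermitian case) and that rank 𝔨 = rank L (the full-rank case). Then for every regular element a of L lying in 𝔨, there exists an element b ∈ 𝔨 that is regular in L, such that L = ⁅a, L⁆ + ⁅b, L⁆ and κ(a, b) = 0; moreover the centralizers of a and of b in L are κ-orthogonal. -/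

import Mathlib

/-!
Let `𝔱` be the centralizer of `a`, a Cartan subalgebra of `L` which the full rank assumption places
inside `𝔨`. For the inner product `-κ(x, θ y)`, `𝔨` is the Lie algebra of the compact group
of isometric automorphisms of `L`. As `𝔨` is semisimple, its roots span `𝔱`, so a product `w` of
root reflections, each of the form `exp (π • ad u)` with `u ∈ 𝔨`, has no nonzero fixed vector in
`𝔱`. By the maximal torus theorem `w` fixes some conjugate `c 𝔱` pointwise. Then
`⟪c x, w y - y⟫ = ⟪w (c x), w y⟫ - ⟪c x, y⟫ = 0` for `x, y ∈ 𝔱`, so `c 𝔱` is orthogonal to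
`(w - 1) 𝔱 = 𝔱`, and `b = c a` is the required element.
-/

open NormedSpace Filter Topology Module

/-- The API for `NormedSpace.exp` is stated for normed algebras over `ℚ`. -/
noncomputable local instance {E : Type*} [NormedAddCommGroup E] [NormedSpace ℝ E] :
    NormedAlgebra ℚ (E →L[ℝ] E) :=
  .restrictScalars ℚ ℝ _

section Exponential

lemma exp_mul_exp_neg_self {R : Type*} [NormedRing R] [NormedAlgebra ℚ R] [CompleteSpace R]
    (A : R) : exp A * exp (-A) = 1 := by
  rw [← exp_add_of_commute (Commute.refl A).neg_right, add_neg_cancel, exp_zero]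

variable {E : Type*} [NormedAddCommGroup E] [NormedSpace ℝ E] [CompleteSpace E]

lemma eq_exp_smul_apply_of_hasDerivAt {A : E →L[ℝ] E} {γ : ℝ → E}
    (hγ : ∀ s, HasDerivAt γ (A (γ s)) s) (s : ℝ) : γ s = exp (s • A) (γ 0) := by
  have hconst : ∀ s, HasDerivAt (fun s : ℝ => exp (s • -A) (γ s)) 0 s := fun s =>
    ((hasDerivAt_exp_smul_const (𝕂 := ℝ) (-A) s).clm_apply (hγ s)).congr_deriv (by simp)
  have h := is_const_of_deriv_eq_zero (fun t => (hconst t).differentiableAt)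
    (fun t => (hconst t).deriv) s 0
  rw [zero_smul, exp_zero, one_apply_eq_self] at h
  rw [← h, ← mul_apply_eq_comp, smul_neg, exp_mul_exp_neg_self, one_apply_eq_self]

lemma exp_apply_eq_self {A : E →L[ℝ] E} {x : E} (h : A x = 0) : exp A x = x := by
  simpa using (eq_exp_smul_apply_of_hasDerivAt (A := A) (γ := fun _ => x)
    (fun s => by simpa [h] using hasDerivAt_const s x) 1).symm

/-- `A` acts on `span {v, t}` as an infinitesimal rotation, so `exp (π A)` is a half-turn there. -/
lemma exp_pi_smul_apply {A : E →L[ℝ] E} {v t p : E} {b : ℝ} (hv : A v = t) (ht : A t = -v)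
    (hp : A p = -(b • v)) : exp (Real.pi • A) p = p - (2 * b) • t := by
  have hγ : ∀ s, HasDerivAt (fun s : ℝ => p - b • (Real.sin s • v + (1 - Real.cos s) • t))
      (A (p - b • (Real.sin s • v + (1 - Real.cos s) • t))) s := fun s => by
    have h := ((((Real.hasDerivAt_sin s).smul_const v).add
      (((Real.hasDerivAt_cos s).const_sub 1).smul_const t)).const_smul b).const_sub p
    refine h.congr_deriv ?_
    simp only [map_sub, map_add, map_smul, hv, ht, hp]
    module
  have h := eq_exp_smul_apply_of_hasDerivAt hγ Real.pi
  simp only [Real.sin_zero, Real.cos_zero, Real.sin_pi, Real.cos_pi] at h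
  simp only [zero_smul, sub_self, add_zero, smul_zero, sub_zero, zero_add] at h
  rw [← h]
  module

section Bilinear

variable {D : E →L[ℝ] E} {B : E →L[ℝ] E →L[ℝ] E}

lemma hasDerivAt_exp_neg_smul_bilinear (D : E →L[ℝ] E) (B : E →L[ℝ] E →L[ℝ] E) (x y : E) (t : ℝ) :
    HasDerivAt (fun t : ℝ => exp (t • -D) (B (exp (t • D) x) (exp (t • D) y)))
      (exp (t • -D) (B (D (exp (t • D) x)) (exp (t • D) y) + B (exp (t • D) x) (D (exp (t • D) y))
        - D (B (exp (t • D) x) (exp (t • D) y)))) t := by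
  have hexp := hasDerivAt_exp_smul_const' (𝕂 := ℝ) D t
  have hB := (B.hasFDerivAt.comp_hasDerivAt t (hexp.clm_apply (hasDerivAt_const t x))).clm_apply
    (hexp.clm_apply (hasDerivAt_const t y))
  refine ((hasDerivAt_exp_smul_const (𝕂 := ℝ) (-D) t).clm_apply hB).congr_deriv ?_
  simp [sub_eq_neg_add]

lemma exp_map_bilinear (h : ∀ x y, D (B x y) = B (D x) y + B x (D y)) (x y : E) :
    exp D (B x y) = B (exp D x) (exp D y) := by
  have hconst : ∀ t, HasDerivAt
      (fun t : ℝ => exp (t • -D) (B (exp (t • D) x) (exp (t • D) y))) 0 t := fun t =>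
    (hasDerivAt_exp_neg_smul_bilinear D B x y t).congr_deriv (by rw [h, sub_self, map_zero])
  have h' := is_const_of_deriv_eq_zero (fun t => (hconst t).differentiableAt)
    (fun t => (hconst t).deriv) 1 0
  simp only [zero_smul, exp_zero, one_apply_eq_self, one_smul] at h'
  rw [← h', ← mul_apply_eq_comp, exp_mul_exp_neg_self, one_apply_eq_self]

omit [CompleteSpace E] in
lemma norm_apply_bilinear_sub_le {P Q : E →L[ℝ] E} (hP : ‖P - 1‖ ≤ 1 / 10) (hQ : ‖Q - 1‖ ≤ 1 / 10)
    (x y : E) : ‖P (B (Q x) (Q y)) - B x y‖ ≤ 1 / 2 * ‖B‖ * ‖x‖ * ‖y‖ := by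
  have hPv : ∀ v, ‖P v - v‖ ≤ 1 / 10 * ‖v‖ := (P - 1).le_of_opNorm_le hP
  have hQv : ∀ v, ‖Q v - v‖ ≤ 1 / 10 * ‖v‖ := (Q - 1).le_of_opNorm_le hQ
  have hQv' : ∀ v, ‖Q v‖ ≤ 11 / 10 * ‖v‖ := fun v => by
    linarith [hQv v, norm_le_norm_sub_add (Q v) v]
  calc ‖P (B (Q x) (Q y)) - B x y‖
      = ‖(P (B (Q x) (Q y)) - B (Q x) (Q y)) + B (Q x - x) (Q y) + B x (Q y - y)‖ := by
        congr 1; simp only [map_sub, sub_apply]; abel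
    _ ≤ 1 / 10 * ‖B (Q x) (Q y)‖ + ‖B (Q x - x) (Q y)‖ + ‖B x (Q y - y)‖ :=
        norm_add₃_le.trans (by gcongr; exact hPv _)
    _ ≤ 1 / 10 * (‖B‖ * (11 / 10 * ‖x‖) * (11 / 10 * ‖y‖))
          + ‖B‖ * (1 / 10 * ‖x‖) * (11 / 10 * ‖y‖) + ‖B‖ * ‖x‖ * (1 / 10 * ‖y‖) := by
        gcongr
        exacts [B.le_of_opNorm₂_le_of_le le_rfl (hQv' x) (hQv' y),
          B.le_of_opNorm₂_le_of_le le_rfl (hQv x) (hQv' y),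
          B.le_of_opNorm₂_le_of_le le_rfl le_rfl (hQv y)]
    _ ≤ 1 / 2 * ‖B‖ * ‖x‖ * ‖y‖ := by
        have : 0 ≤ ‖B‖ * ‖x‖ * ‖y‖ := by positivity
        linarith

lemma eventually_norm_exp_smul_sub_one_le {ε : ℝ} (hε : 0 < ε) :
    ∀ᶠ X : E →L[ℝ] E in 𝓝 0, ∀ t ∈ Set.Icc (0 : ℝ) 1, ‖exp (t • X) - 1‖ ≤ ε := by
  have hc : Tendsto (fun X : E →L[ℝ] E => exp X - 1) (𝓝 0) (𝓝 0) :=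
    (exp_continuous.sub continuous_const).tendsto' _ _ (by simp)
  obtain ⟨r, hr, hball⟩ := Metric.eventually_nhds_iff_ball.1
    (hc.eventually (Metric.closedBall_mem_nhds _ hε))
  filter_upwards [Metric.ball_mem_nhds _ hr] with X hX t ht
  refine mem_closedBall_zero_iff.1 (hball _ ?_)
  rw [mem_ball_zero_iff, norm_smul, Real.norm_of_nonneg ht.1]
  exact (mul_le_of_le_one_left (norm_nonneg _) ht.2).trans_lt (by simpa using hX)

lemma eventually_map_bilinear_of_exp_map_bilinear (B : E →L[ℝ] E →L[ℝ] E) :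
    ∀ᶠ D : E →L[ℝ] E in 𝓝 0, (∀ x y, exp D (B x y) = B (exp D x) (exp D y)) →
      ∀ x y, D (B x y) = B (D x) y + B x (D y) := by
  have hsmall := eventually_norm_exp_smul_sub_one_le (E := E) (show (0 : ℝ) < 1 / 10 by norm_num)
  filter_upwards [hsmall, (continuous_neg.tendsto' (0 : E →L[ℝ] E) 0 neg_zero).eventually hsmall]
    with D hD hnegD haut
  let W : E →L[ℝ] E →L[ℝ] E := B ∘L D + ((ContinuousLinearMap.compL ℝ E E E).flip D) ∘L B -
    (ContinuousLinearMap.compL ℝ E E E D) ∘L B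
  have hW : ∀ x y, W x y = B (D x) y + B x (D y) - D (B x y) := fun x y => rfl
  have hbound : ∀ x y, ‖W x y‖ ≤ 1 / 2 * ‖W‖ * ‖x‖ * ‖y‖ := fun x y => by
    -- the curve `t ↦ exp (-tD) B (exp (tD) x, exp (tD) y) - t W (x, y)` has small derivative
    have hderiv : ∀ t ∈ Set.Icc (0 : ℝ) 1, HasDerivWithinAt
        (fun t : ℝ => exp (t • -D) (B (exp (t • D) x) (exp (t • D) y)) - t • W x y)
        (exp (t • -D) (W (exp (t • D) x) (exp (t • D) y)) - W x y) (Set.Icc 0 1) t := fun t _ =>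
      (((hasDerivAt_exp_neg_smul_bilinear D B x y t).sub
        ((hasDerivAt_id t).smul_const (W x y))).congr_deriv
          (by simp only [hW, one_smul])).hasDerivWithinAt
    have h := norm_image_sub_le_of_norm_deriv_le_segment_01' hderiv fun t ht =>
      norm_apply_bilinear_sub_le (hnegD t (Set.Ico_subset_Icc_self ht))
        (hD t (Set.Ico_subset_Icc_self ht)) x y
    have hone : exp (-D) (B (exp D x) (exp D y)) = B x y := by
      rw [← haut, ← mul_apply_eq_comp]
      simpa using congr($(exp_mul_exp_neg_self (-D)) (B x y))
    simpa [hone] using h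
  have hnorm := W.opNorm_le_bound₂ (by positivity) hbound
  have hzero : ‖W‖ = 0 := by linarith [norm_nonneg W]
  intro x y
  have hWxy := hbound x y
  simp only [hzero, mul_zero, zero_mul, norm_le_zero_iff, hW, sub_eq_zero] at hWxy
  exact hWxy.symm

end Bilinear

omit [CompleteSpace E] in
lemma hasStrictFDerivAt_exp_mul_exp_mul_exp {R : Type*} [NormedRing R] [NormedAlgebra ℚ R]
    [NormedAlgebra ℝ R] [CompleteSpace R] (A B C : E →L[ℝ] R) :
    HasStrictFDerivAt (fun p => exp (A p) * exp (B p) * exp (C p)) (A + B + C) 0 := by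
  have hexp : ∀ A : E →L[ℝ] R, HasStrictFDerivAt (fun p => exp (A p)) A 0 := fun A => by
    have h : HasStrictFDerivAt (exp : R → R) (1 : R →L[ℝ] R) (A 0) := by
      rw [map_zero]; exact hasStrictFDerivAt_exp_zero
    exact h.comp (0 : E) A.hasStrictFDerivAt
  refine (((hexp A).mul' (hexp B)).mul' (hexp C)).congr_fderiv ?_
  ext p
  simp [add_comm, add_left_comm]

lemma exists_local_inverse_exp (R : Type*) [NormedRing R] [NormedAlgebra ℚ R] [NormedAlgebra ℝ R]
    [CompleteSpace R] : ∃ l : R → R, HasStrictFDerivAt l (ContinuousLinearMap.id ℝ R) 1 ∧ l 1 = 0 ∧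
      (∀ᶠ u in 𝓝 1, exp (l u) = u) ∧ ∀ᶠ x in 𝓝 0, l (exp x) = x := by
  have h : HasStrictFDerivAt (exp : R → R)
      (ContinuousLinearEquiv.refl ℝ R : R →L[ℝ] R) 0 := hasStrictFDerivAt_exp_zero
  have hderiv := h.to_localInverse
  have hzero := h.localInverse_apply_image
  have hright := h.eventually_right_inverse
  rw [exp_zero] at hderiv hzero hright
  exact ⟨h.localInverse, hderiv, hzero, hright, h.eventually_left_inverse⟩

end Exponential

section InnerProductSpace

variable {V : Type*} [NormedAddCommGroup V] [InnerProductSpace ℝ V] [FiniteDimensional ℝ V]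

lemma exists_joint_eigenvector_map_ne_zero {ι M : Type*} [AddCommGroup M] [Module ℝ M]
    {T : ι → V →ₗ[ℝ] V} (hT : ∀ i, (T i).IsSymmetric) (hcomm : ∀ i j, Commute (T i) (T j))
    {f : V →ₗ[ℝ] M} (hf : f ≠ 0) : ∃ u, f u ≠ 0 ∧ ∃ χ : ι → ℝ, ∀ i, T i u = χ i • u := by
  by_contra! h
  refine hf (LinearMap.ker_eq_top.1 (top_le_iff.1 ?_))
  rw [← LinearMap.IsSymmetric.iSup_iInf_eq_top_of_commute hT fun i j _ => hcomm i j]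
  refine iSup_le fun χ u hu => of_not_not fun hfu => ?_
  obtain ⟨i, hi⟩ := h u hfu χ
  exact hi (End.mem_eigenspace_iff.1 ((Submodule.mem_iInf _).1 hu i))

omit [FiniteDimensional ℝ V] in
lemma reflection_orthogonal_span_singleton_apply (t v : V) :
    (ℝ ∙ t)ᗮ.reflection v = v - (2 * (inner ℝ t v / ‖t‖ ^ 2)) • t := by
  rw [Submodule.reflection_orthogonal_apply, Submodule.reflection_singleton_apply]
  simp [two_smul, add_smul, two_mul]

omit [FiniteDimensional ℝ V] in
lemma exists_mem_closure_reflection_of_finset (T : Finset V) :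
    ∃ w ∈ Submonoid.closure ((fun t => (ℝ ∙ t)ᗮ.reflection) '' (T : Set V)),
      (∀ v, w v - v ∈ Submodule.span ℝ (T : Set V)) ∧
      ∀ v, w v = v → v ∈ (Submodule.span ℝ (T : Set V))ᗮ := by
  classical
  induction T using Finset.induction_on with
  | empty => exact ⟨1, one_mem _, by simp⟩
  | insert t T _ ih =>
    obtain ⟨w, hw, hsub, hfix⟩ := ih
    have hmono := Submonoid.closure_mono (Set.image_mono (f := fun t => (ℝ ∙ t)ᗮ.reflection)
      (Finset.coe_subset.2 (Finset.subset_insert t T)))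
    rw [Finset.coe_insert, Submodule.span_insert] at *
    by_cases ht : t ∈ Submodule.span ℝ (T : Set V)
    · rw [sup_eq_right.2 ((Submodule.span_singleton_le_iff_mem _ _).2 ht)]
      exact ⟨w, hmono hw, hsub, hfix⟩
    · refine ⟨(ℝ ∙ t)ᗮ.reflection * w,
        mul_mem (Submonoid.subset_closure ⟨t, by simp, rfl⟩) (hmono hw), fun v => ?_,
        fun v hv => ?_⟩
      · rw [LinearIsometryEquiv.coe_mul, Function.comp_apply,
          reflection_orthogonal_span_singleton_apply, sub_right_comm, sub_eq_neg_add, ← neg_smul]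
        exact Submodule.add_mem_sup (Submodule.smul_mem _ _ (Submodule.mem_span_singleton_self t))
          (hsub v)
      · rw [LinearIsometryEquiv.coe_mul, Function.comp_apply,
          reflection_orthogonal_span_singleton_apply, sub_eq_iff_eq_add', ← sub_eq_iff_eq_add] at hv
        have hcoeff : 2 * (inner ℝ t (w v) / ‖t‖ ^ 2) = 0 := of_not_not fun hne =>
          ht ((Submodule.smul_mem_iff _ hne).1 (hv ▸ hsub v))
        rw [hcoeff, zero_smul, sub_eq_zero] at hv
        have ht0 : t ≠ 0 := fun h => ht (h ▸ zero_mem _)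
        rw [hv] at hcoeff
        rw [← Submodule.inf_orthogonal]
        refine ⟨Submodule.mem_orthogonal_singleton_iff_inner_right.2 ?_, hfix v hv⟩
        simpa [ht0] using hcoeff

lemma exists_mem_closure_reflection_forall_eq_zero {T : Set V} (hT : Submodule.span ℝ T = ⊤) :
    ∃ w ∈ Submonoid.closure ((fun t => (ℝ ∙ t)ᗮ.reflection) '' T), ∀ v, w v = v → v = 0 := by
  obtain ⟨S, hST, hS⟩ := (Submodule.fg_span_iff_fg_span_finset_subset T).1
    (hT ▸ Module.Finite.fg_top)
  obtain ⟨w, hw, -, hfix⟩ := exists_mem_closure_reflection_of_finset S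
  refine ⟨w, Submonoid.closure_mono (Set.image_mono hST) hw, fun v hv => ?_⟩
  simpa [← hS, hT] using hfix v hv

end InnerProductSpace

lemma lie_lie_comm_of_lie_eq_zero {R M : Type*} [LieRing R] [AddCommGroup M] [LieRingModule R M]
    {x y : R} (h : ⁅x, y⁆ = 0) (m : M) : ⁅x, ⁅y, m⁆⁆ = ⁅y, ⁅x, m⁆⁆ := by
  rw [leibniz_lie, h, zero_lie, zero_add]

/-- A real Lie algebra which is also an inner product space. The bracket and the inner product are
not assumed to be compatible. -/
class InnerProductLieAlgebra (L : Type*) extends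
  NormedAddCommGroup L, LieRing L, InnerProductSpace ℝ L, LieAlgebra ℝ L

/-- The inner product Lie algebra given by a positive definite symmetric bilinear form. -/
noncomputable abbrev InnerProductLieAlgebra.ofBilinForm {L : Type*} [LieRing L] [LieAlgebra ℝ L]
    (B : LinearMap.BilinForm ℝ L) (hsymm : B.IsSymm) (hpos : ∀ x, x ≠ 0 → 0 < B x x) :
    InnerProductLieAlgebra L :=
  let core : InnerProductSpace.Core ℝ L :=
    { inner := fun x y => B x y
      conj_inner_symm := fun x y => by simpa using hsymm.eq y x
      re_inner_nonneg := fun x => by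
        rcases eq_or_ne x 0 with rfl | hx
        · simp
        · simpa using (hpos x hx).le
      add_left := fun x y z => by simp
      smul_left := fun x y r => by simp
      definite := fun x => by contrapose!; exact fun hx => (hpos x hx).ne' }
  { core.toNormedAddCommGroup, InnerProductSpace.ofCore core.toCore, ‹LieRing L›,
    ‹LieAlgebra ℝ L› with }

namespace InnerProductLieAlgebra

variable {L : Type*} [InnerProductLieAlgebra L] [FiniteDimensional ℝ L]

/-- The adjoint representation by bounded operators. -/
noncomputable def adL : L →L[ℝ] L →L[ℝ] L :=
  LinearMap.toContinuousBilinearMap (LieAlgebra.ad ℝ L : L →ₗ[ℝ] End ℝ L)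

@[simp] lemma adL_apply (x y : L) : adL x y = ⁅x, y⁆ := rfl

variable (L) in
/-- The elements whose adjoint action is skew for the inner product, that is, the Lie algebra of
`isometryAut L` when all derivations are inner. -/
noncomputable def skewAd : Submodule ℝ L :=
  (skewAdjoint.submodule ℝ (L →L[ℝ] L)).comap (adL : L →L[ℝ] L →L[ℝ] L).toLinearMap

lemma mem_skewAd_iff_star {x : L} : x ∈ skewAd L ↔ star (adL x) = -adL x := Iff.rfl

lemma mem_skewAd_iff {x : L} : x ∈ skewAd L ↔ ∀ y z : L, inner ℝ ⁅x, y⁆ z = -inner ℝ y ⁅x, z⁆ := by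
  rw [mem_skewAd_iff_star, ContinuousLinearMap.star_eq_adjoint, eq_comm,
    ContinuousLinearMap.eq_adjoint_iff]
  simp only [neg_apply, adL_apply, inner_neg_left, neg_eq_iff_eq_neg]

lemma lie_mem_skewAd {x y : L} (hx : x ∈ skewAd L) (hy : y ∈ skewAd L) : ⁅x, y⁆ ∈ skewAd L := by
  rw [mem_skewAd_iff] at *
  intro v w
  simp only [lie_lie, inner_sub_left, inner_sub_right, hx, hy]
  ring

variable (L) in
/-- The compact group of isometric automorphisms. -/
def isometryAut : Submonoid (L →L[ℝ] L) where
  carrier := {g | g ∈ unitary (L →L[ℝ] L) ∧ ∀ x y : L, g ⁅x, y⁆ = ⁅g x, g y⁆}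
  one_mem' := ⟨one_mem _, by simp⟩
  mul_mem' hg hh := ⟨mul_mem hg.1 hh.1, fun x y => by simp [hg.2, hh.2]⟩

section IsometryAut

variable {g : L →L[ℝ] L}

lemma map_lie_of_mem (hg : g ∈ isometryAut L) (x y : L) : g ⁅x, y⁆ = ⁅g x, g y⁆ := hg.2 x y

lemma star_mul_self_of_mem (hg : g ∈ isometryAut L) : star g * g = 1 := hg.1.1

lemma mul_star_self_of_mem (hg : g ∈ isometryAut L) : g * star g = 1 := hg.1.2

lemma star_apply_apply (hg : g ∈ isometryAut L) (x : L) : star g (g x) = x :=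
  congr($(star_mul_self_of_mem hg) x)

lemma apply_star_apply (hg : g ∈ isometryAut L) (x : L) : g (star g x) = x :=
  congr($(mul_star_self_of_mem hg) x)

lemma star_mem_isometryAut (hg : g ∈ isometryAut L) : star g ∈ isometryAut L := by
  refine ⟨Unitary.star_mem hg.1, fun x y => ?_⟩
  rw [← star_apply_apply hg ⁅star g x, star g y⁆, map_lie_of_mem hg, apply_star_apply hg,
    apply_star_apply hg]

lemma inner_star_left (g : L →L[ℝ] L) (x y : L) : inner ℝ (star g x) y = inner ℝ x (g y) :=
  g.adjoint_inner_left y x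

lemma inner_map_map_of_mem (hg : g ∈ isometryAut L) (x y : L) :
    inner ℝ (g x) (g y) = inner ℝ x y := by
  rw [← inner_star_left, star_apply_apply hg]

lemma mul_adL_mul_star (hg : g ∈ isometryAut L) (z : L) : g * adL z * star g = adL (g z) := by
  ext x
  simp [map_lie_of_mem hg, apply_star_apply hg]

lemma map_mem_skewAd (hg : g ∈ isometryAut L) {x : L} (hx : x ∈ skewAd L) : g x ∈ skewAd L := by
  rw [mem_skewAd_iff_star] at *
  simp [← mul_adL_mul_star hg, hx, mul_assoc]

lemma mul_exp_adL_mul_star (hg : g ∈ isometryAut L) (z : L) :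
    g * exp (adL z) * star g = exp (adL (g z)) := by
  rw [← mul_adL_mul_star hg]
  exact (exp_units_conj ⟨g, star g, mul_star_self_of_mem hg, star_mul_self_of_mem hg⟩ _).symm

lemma isClosed_isometryAut : IsClosed (isometryAut L : Set (L →L[ℝ] L)) := by
  refine isClosed_unitary.inter (s₂ := {g : L →L[ℝ] L | ∀ x y : L, g ⁅x, y⁆ = ⁅g x, g y⁆}) ?_
  simp only [Set.ofPred_forall]
  refine isClosed_iInter fun x => isClosed_iInter fun y => isClosed_eq (by fun_prop) ?_
  exact (adL.continuous.comp (by fun_prop)).clm_apply (by fun_prop)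

lemma isCompact_isometryAut : IsCompact (isometryAut L : Set (L →L[ℝ] L)) := by
  refine Metric.isCompact_of_isClosed_isBounded isClosed_isometryAut <|
    Metric.isBounded_closedBall (x := 0) (r := 1) |>.subset fun g hg => ?_
  rw [mem_closedBall_zero_iff]
  refine ContinuousLinearMap.opNorm_le_bound _ zero_le_one fun x => ?_
  rw [one_mul, norm_eq_sqrt_real_inner, norm_eq_sqrt_real_inner, inner_map_map_of_mem hg]

/-- An isometric automorphism as a Lie algebra equivalence. -/
noncomputable def toLieEquiv (hg : g ∈ isometryAut L) : L ≃ₗ⁅ℝ⁆ L where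
  __ := g.toLinearMap
  map_lie' := map_lie_of_mem hg _ _
  invFun := (star g : L →L[ℝ] L)
  left_inv := star_apply_apply hg
  right_inv := apply_star_apply hg

end IsometryAut

section Exponential

variable {z : L}

lemma exp_adL_mem_isometryAut (hz : z ∈ skewAd L) : exp (adL z) ∈ isometryAut L :=
  ⟨exp_mem_unitary_of_mem_skewAdjoint hz, exp_map_bilinear (B := adL) (leibniz_lie z)⟩

lemma star_exp_adL (hz : z ∈ skewAd L) : star (exp (adL z)) = exp (-adL z) := by
  rw [star_exp, mem_skewAd_iff_star.1 hz]

lemma exp_smul_adL_mem_isometryAut (hz : z ∈ skewAd L) (t : ℝ) :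
    exp (t • adL z) ∈ isometryAut L := by
  rw [← map_smul]
  exact exp_adL_mem_isometryAut (Submodule.smul_mem _ t hz)

end Exponential

/-- Maximise `⟪c x, a⟫` over the automorphisms `c` commuting with `g`. -/
lemma exists_commute_lie_map_eq_zero {g : L →L[ℝ] L} (hg : g ∈ isometryAut L) {a x : L}
    (ha : a ∈ skewAd L) (hx : x ∈ skewAd L) (hga : g a = a) (hgx : g x = x) :
    ∃ c ∈ isometryAut L, Commute c g ∧ ⁅a, c x⁆ = 0 := by
  have hcompact : IsCompact ((isometryAut L : Set (L →L[ℝ] L)) ∩ {c | c * g = g * c}) :=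
    isCompact_isometryAut.inter_right (isClosed_eq (by fun_prop) (by fun_prop))
  obtain ⟨c, ⟨hc, hcg⟩, hmax⟩ := hcompact.exists_isMaxOn ⟨1, one_mem _, by simp⟩
    (f := fun c : L →L[ℝ] L => (inner ℝ (c x) a : ℝ)) (by fun_prop)
  refine ⟨c, hc, hcg, ?_⟩
  have hcx := map_mem_skewAd hc hx
  set z := ⁅a, c x⁆ with hz
  have hzmem : z ∈ skewAd L := lie_mem_skewAd ha hcx
  have hgcx : g (c x) = c x := by
    simpa [hgx] using congr($hcg.symm x)
  have hgz : Commute g (adL z) := by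
    have h := mul_adL_mul_star hg z
    rw [hz, map_lie_of_mem hg, hga, hgcx, ← hz] at h
    rw [commute_iff_eq]
    nth_rw 2 [← h]
    rw [mul_assoc, star_mul_self_of_mem hg, mul_one]
  have hderiv : HasDerivAt (fun t : ℝ => inner ℝ (exp (t • adL z) (c x)) a)
      (inner ℝ ⁅z, c x⁆ a) 0 := by
    have h := ((hasDerivAt_exp_smul_const (𝕂 := ℝ) (adL z) 0).clm_apply
      (hasDerivAt_const (0 : ℝ) (c x))).inner ℝ (hasDerivAt_const (0 : ℝ) a)
    simpa using h
  have hloc : IsLocalMax (fun t : ℝ => (inner ℝ (exp (t • adL z) (c x)) a : ℝ)) 0 :=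
    .of_forall fun t => by
      have hcomm : Commute (exp (t • adL z) * c) g :=
        ((hgz.smul_right t).exp_right.symm).mul_left hcg
      simpa using hmax ⟨mul_mem (exp_smul_adL_mem_isometryAut hzmem t) hc, hcomm.eq⟩
  have hzero := hloc.hasDerivAt_eq_zero hderiv
  rw [← lie_skew, inner_neg_left, mem_skewAd_iff.1 hcx, neg_neg, ← lie_skew (c x) a,
    ← hz, inner_neg_right, neg_eq_zero] at hzero
  exact inner_self_eq_zero.1 hzero

lemma exists_eq_star_apply_add_sub {g : L →L[ℝ] L} (hg : g ∈ isometryAut L) {z : L}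
    (hz : z ∈ skewAd L) :
    ∃ y ∈ skewAd L, ∃ x ∈ skewAd L, g x = x ∧ star g y + x - y = z := by
  let W : Submodule ℝ L := (skewAd L).map (star g - 1).toLinearMap ⊔
    (skewAd L ⊓ LinearMap.eqLocus g.toLinearMap LinearMap.id)
  have hW : W ≤ skewAd L := by
    refine sup_le (Submodule.map_le_iff_le_comap.2 fun y hy => ?_) inf_le_left
    exact Submodule.sub_mem _ (map_mem_skewAd (star_mem_isometryAut hg) hy) hy
  obtain ⟨w, hw, q, hq, rfl⟩ := W.exists_add_mem_mem_orthogonal z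
  have hqmem : q ∈ skewAd L := by simpa using Submodule.sub_mem _ hz (hW hw)
  have hgq : g q = q := by
    have h : inner ℝ (star g (g q - q) - (g q - q)) q = 0 := hq _ <| Submodule.mem_sup_left
      ⟨g q - q, Submodule.sub_mem _ (map_mem_skewAd hg hqmem) hqmem, rfl⟩
    rwa [inner_sub_left, inner_star_left, ← inner_sub_right, inner_self_eq_zero, sub_eq_zero] at h
  have hq0 : q = 0 := inner_self_eq_zero.1 (hq q (Submodule.mem_sup_right ⟨hqmem, hgq⟩))
  obtain ⟨_, ⟨y, hy, rfl⟩, x, ⟨hx, hgx⟩, rfl⟩ := Submodule.mem_sup.1 hw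
  refine ⟨y, hy, x, hx, hgx, ?_⟩
  simp [hq0]
  abel

lemma mul_exp_star_apply_mul_exp_mul_exp_neg {g : L →L[ℝ] L} (hg : g ∈ isometryAut L) (x : L)
    {y : L} (hy : y ∈ skewAd L) :
    g * (exp (adL (star g y)) * exp (adL x) * exp (-adL y)) =
      exp (adL y) * (g * exp (adL x)) * star (exp (adL y)) := by
  have h := mul_exp_adL_mul_star hg (star g y)
  rw [apply_star_apply hg] at h
  rw [star_exp_adL hy, ← h]
  simp only [mul_assoc]
  rw [← mul_assoc (star g) g, star_mul_self_of_mem hg, one_mul]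

section Killing

variable [LieAlgebra.IsKilling ℝ L]

lemma adL_injective : Function.Injective (adL : L →L[ℝ] L →L[ℝ] L) := by
  refine (injective_iff_map_eq_zero _).2 fun x hx => ?_
  exact (LieDerivation.IsKilling.ad_apply_eq_zero_iff ℝ L x).1 <|
    LieDerivation.ext fun y => by simpa using congr($hx y)

lemma exists_adL_eq {D : L →L[ℝ] L} (hD : ∀ x y : L, D ⁅x, y⁆ = ⁅D x, y⁆ + ⁅x, D y⁆) :
    ∃ w, adL w = D := by
  let D' : LieDerivation ℝ L L :=
    ⟨D.toLinearMap, fun x y => by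
      rw [← lie_skew y, sub_neg_eq_add, add_comm]; exact hD x y⟩
  obtain ⟨w, hw⟩ := LieDerivation.IsKilling.exists_eq_ad D'
  exact ⟨w, ContinuousLinearMap.ext fun x => by simpa [D'] using congr($hw x)⟩

lemma eventually_exists_adL_eq_of_exp_mem :
    ∀ᶠ D : L →L[ℝ] L in 𝓝 0, exp D ∈ isometryAut L → ∃ w ∈ skewAd L, adL w = D := by
  obtain ⟨l, -, -, -, hl⟩ := exists_local_inverse_exp (L →L[ℝ] L)
  filter_upwards [eventually_map_bilinear_of_exp_map_bilinear adL,
    (continuous_star.tendsto' (0 : L →L[ℝ] L) 0 (star_zero _)).eventually hl,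
    (continuous_neg.tendsto' (0 : L →L[ℝ] L) 0 neg_zero).eventually hl] with D hder hstar hneg hD
  obtain ⟨w, rfl⟩ := exists_adL_eq (hder hD.2)
  refine ⟨w, mem_skewAd_iff_star.2 ?_, rfl⟩
  have hexp : exp (star (adL w)) = exp (-adL w) := by
    rw [← star_exp]
    exact left_inv_eq_right_inv hD.1.1 (exp_mul_exp_neg_self _)
  rw [← hstar, hexp, hneg]

lemma exists_log : ∃ (lg : (L →L[ℝ] L) → skewAd L) (π : (L →L[ℝ] L) →L[ℝ] skewAd L),
    HasStrictFDerivAt lg π 1 ∧ lg 1 = 0 ∧ (∀ z : skewAd L, π (adL (z : L)) = z) ∧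
      ∀ᶠ u in 𝓝 1, u ∈ isometryAut L → exp (adL (lg u : L)) = u := by
  obtain ⟨l, hderiv, hzero, hright, -⟩ := exists_local_inverse_exp (L →L[ℝ] L)
  obtain ⟨π, hπ⟩ := (adL.toLinearMap ∘ₗ (skewAd L).subtype).exists_leftInverse_of_injective <|
    LinearMap.ker_eq_bot.2 <| adL_injective.comp Subtype.val_injective
  have hπ' (z : skewAd L) : π (adL (z : L)) = z := congr($hπ z)
  refine ⟨fun u => π (l u), π.toContinuousLinearMap,
    π.toContinuousLinearMap.hasStrictFDerivAt.comp 1 hderiv, by simp [hzero], hπ', ?_⟩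
  filter_upwards [hright, (hzero ▸ hderiv.continuousAt.tendsto).eventually
    eventually_exists_adL_eq_of_exp_mem] with u hu hlog hmem
  obtain ⟨w, hw, hwl⟩ := hlog (hu.symm ▸ hmem)
  rw [← hwl, hπ' ⟨w, hw⟩, hwl, hu]

/-- By `exists_eq_star_apply_add_sub`, the map `(y, x) ↦ g⁻¹ * exp (ad y) * g * exp (ad x) *
exp (-ad y)` is a submersion at `0`. -/
lemma eventually_exists_conj_mul_exp {g : L →L[ℝ] L} (hg : g ∈ isometryAut L) :
    ∀ᶠ z : skewAd L in 𝓝 0, ∃ h ∈ isometryAut L, ∃ x ∈ skewAd L, g x = x ∧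
      g * exp (adL (z : L)) = h * (g * exp (adL x)) * star h := by
  obtain ⟨lg, π, hlg, hlg1, hπ, hexp⟩ := exists_log (L := L)
  let X : Submodule ℝ L := skewAd L ⊓ LinearMap.eqLocus g.toLinearMap LinearMap.id
  let i : skewAd L × X →L[ℝ] L := (skewAd L).subtypeL ∘L .fst ℝ _ _
  let j : skewAd L × X →L[ℝ] L := X.subtypeL ∘L .snd ℝ _ _
  let f : skewAd L × X → L →L[ℝ] L := fun p =>
    exp (adL (star g (p.1 : L))) * exp (adL (p.2 : L)) * exp (-adL (p.1 : L))
  have hf : HasStrictFDerivAt f (adL ∘L star g ∘L i + adL ∘L j + -(adL ∘L i)) 0 :=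
    hasStrictFDerivAt_exp_mul_exp_mul_exp (adL ∘L star g ∘L i) (adL ∘L j) (-(adL ∘L i))
  have hf0 : f 0 = 1 := by simp [f]
  have hfmem (p : skewAd L × X) : f p ∈ isometryAut L := by
    refine mul_mem (mul_mem (exp_adL_mem_isometryAut <| map_mem_skewAd
      (star_mem_isometryAut hg) p.1.2) (exp_adL_mem_isometryAut p.2.2.1)) ?_
    rw [← map_neg]
    exact exp_adL_mem_isometryAut (Submodule.neg_mem _ p.1.2)
  have hlgf := HasStrictFDerivAt.comp (g := lg) 0 (hf0 ▸ hlg) hf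
  have hsurj : (π ∘L (adL ∘L star g ∘L i + adL ∘L j + -(adL ∘L i))).range = ⊤ := by
    refine LinearMap.range_eq_top.2 fun z => ?_
    obtain ⟨y, hy, x, hx, hgx, hz⟩ := exists_eq_star_apply_add_sub hg z.2
    refine ⟨(⟨y, hy⟩, ⟨x, hx, hgx⟩), ?_⟩
    rw [← hπ z, ← hz]
    simp [i, j, sub_eq_add_neg]
  have himage := Filter.image_mem_map (m := fun p => lg (f p))
    ((hf0 ▸ hf.continuousAt.tendsto).eventually hexp)
  rw [hlgf.map_nhds_eq_of_surj hsurj, hf0, hlg1] at himage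
  filter_upwards [himage]
  rintro _ ⟨⟨y, x⟩, hyx, rfl⟩
  refine ⟨_, exp_adL_mem_isometryAut y.2, x, x.2.1, x.2.2, ?_⟩
  rw [← mul_exp_star_apply_mul_exp_mul_exp_neg hg x y.2]
  exact congr(g * $(hyx (hfmem _)))

end Killing

section Torus

variable {a x : L} {g h : L →L[ℝ] L}

/-- The centralizer of `a` in `skewAd L`; in the application this is a Cartan subalgebra. -/
noncomputable def skewCentralizer (a : L) : Submodule ℝ L :=
  skewAd L ⊓ LinearMap.ker (adL a).toLinearMap

lemma self_mem_skewCentralizer (ha : a ∈ skewAd L) : a ∈ skewCentralizer a := ⟨ha, lie_self a⟩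

/-- The isometric automorphisms fixing pointwise some conjugate of `skewCentralizer a`. When this
centralizer is a Cartan subalgebra of `skewAd L`, these are the elements lying in a
maximal torus. -/
def toralAut (a : L) : Set (L →L[ℝ] L) :=
  {g | g ∈ isometryAut L ∧ ∃ c ∈ isometryAut L, ∀ x ∈ skewCentralizer a, g (c x) = c x}

lemma one_mem_toralAut : 1 ∈ toralAut a :=
  ⟨one_mem _, 1, one_mem _, fun _ _ => rfl⟩

lemma mul_mul_star_mem_toralAut (hg : g ∈ toralAut a) (hh : h ∈ isometryAut L) :
    h * g * star h ∈ toralAut a := by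
  obtain ⟨hg, c, hc, hfix⟩ := hg
  refine ⟨mul_mem (mul_mem hh hg) (star_mem_isometryAut hh), h * c, mul_mem hh hc, fun x hx => ?_⟩
  simp [star_apply_apply hh, hfix x hx]

lemma isClosed_toralAut : IsClosed (toralAut a) := by
  have hcompact : IsCompact (((isometryAut L : Set (L →L[ℝ] L)) ×ˢ (isometryAut L : Set _)) ∩
      {q : (L →L[ℝ] L) × (L →L[ℝ] L) | ∀ x ∈ skewCentralizer a, q.1 (q.2 x) = q.2 x}) := by
    refine (isCompact_isometryAut.prod isCompact_isometryAut).inter_right ?_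
    simp only [Set.ofPred_forall]
    exact isClosed_iInter fun x => isClosed_iInter fun _ => isClosed_eq (by fun_prop) (by fun_prop)
  convert (hcompact.image continuous_fst).isClosed using 1
  ext g
  constructor
  · rintro ⟨hg, c, hc, hfix⟩
    exact ⟨(g, c), ⟨⟨hg, hc⟩, hfix⟩, rfl⟩
  · rintro ⟨⟨g, c⟩, ⟨⟨hg, hc⟩, hfix⟩, rfl⟩
    exact ⟨hg, c, hc, hfix⟩

lemma mul_exp_mem_toralAut_of_apply_eq (ha : a ∈ skewAd L)
    (hab : ∀ x ∈ skewCentralizer a, ∀ y ∈ skewCentralizer a, ⁅x, y⁆ = 0)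
    (hg : g ∈ toralAut a) (hx : x ∈ skewAd L) (hgx : g x = x) :
    g * exp (adL x) ∈ toralAut a := by
  obtain ⟨hg, c, hc, hfix⟩ := hg
  obtain ⟨d, hd, hdg, hlie⟩ := exists_commute_lie_map_eq_zero hg (map_mem_skewAd hc ha) hx
    (hfix a (self_mem_skewCentralizer ha)) hgx
  have hc' := star_mem_isometryAut hc
  have hd' := star_mem_isometryAut hd
  have hcd : star c (d x) ∈ skewCentralizer a := by
    refine ⟨map_mem_skewAd hc' (map_mem_skewAd hd hx), ?_⟩
    simpa [map_lie_of_mem hc', star_apply_apply hc] using congr(star c $hlie)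
  refine ⟨mul_mem hg (exp_adL_mem_isometryAut hx), star d * c, mul_mem hd' hc, fun v hv => ?_⟩
  have hxv : ⁅x, star d (c v)⁆ = 0 := by
    simpa [map_lie_of_mem hc, map_lie_of_mem hd', apply_star_apply hc, star_apply_apply hd]
      using congr(star d (c $(hab _ hcd v hv)))
  have hgv : g (star d (c v)) = star d (c v) := by
    rw [← star_apply_apply hd (g _)]
    congr 1
    simpa [apply_star_apply hd, hfix v hv] using congr($hdg (star d (c v)))
  simp [exp_apply_eq_self (A := adL x) hxv, hgv]

variable [LieAlgebra.IsKilling ℝ L]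

lemma eventually_mul_exp_mem_toralAut (ha : a ∈ skewAd L)
    (hab : ∀ x ∈ skewCentralizer a, ∀ y ∈ skewCentralizer a, ⁅x, y⁆ = 0) (hg : g ∈ toralAut a) :
    ∀ᶠ z : skewAd L in 𝓝 0, g * exp (adL (z : L)) ∈ toralAut a := by
  filter_upwards [eventually_exists_conj_mul_exp hg.1] with z ⟨h, hh, x, hx, hgx, hz⟩
  exact hz ▸ mul_mul_star_mem_toralAut (mul_exp_mem_toralAut_of_apply_eq ha hab hg hx hgx) hh

lemma mul_exp_mem_toralAut (ha : a ∈ skewAd L)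
    (hab : ∀ x ∈ skewCentralizer a, ∀ y ∈ skewCentralizer a, ⁅x, y⁆ = 0)
    (hg : g ∈ toralAut a) (hx : x ∈ skewAd L) : g * exp (adL x) ∈ toralAut a := by
  let A : Set ℝ := {t | g * exp (t • adL x) ∈ toralAut a}
  have hclosed : IsClosed A :=
    isClosed_toralAut.preimage (continuous_const.mul (exp_continuous.comp (by fun_prop)))
  have hopen : IsOpen A := isOpen_iff_mem_nhds.2 fun s hs => by
    have htendsto : Tendsto (fun t : ℝ => (t - s) • (⟨x, hx⟩ : skewAd L)) (𝓝 s) (𝓝 0) :=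
      Continuous.tendsto' (by fun_prop) _ _ (by simp)
    filter_upwards [htendsto.eventually (eventually_mul_exp_mem_toralAut ha hab hs)] with t ht
    have hexp : exp (t • adL x) = exp (s • adL x) * exp ((t - s) • adL x) := by
      rw [← exp_add_of_commute (((Commute.refl _).smul_left _).smul_right _), ← add_smul,
        add_sub_cancel]
    simpa [A, hexp, mul_assoc] using ht
  have huniv : A = Set.univ := IsClopen.eq_univ ⟨hclosed, hopen⟩ ⟨0, by simpa [A] using hg⟩
  simpa [A] using huniv.ge (Set.mem_univ 1)

end Torus

section Root

variable {a : L}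

lemma exists_eigenvector_lie_lie (ha : a ∈ skewAd L)
    (hab : ∀ x ∈ skewCentralizer a, ∀ y ∈ skewCentralizer a, ⁅x, y⁆ = 0)
    (hcenter : ∀ x ∈ skewAd L, (∀ y ∈ skewAd L, ⁅x, y⁆ = 0) → x = 0)
    {v : L} (hv : v ∈ skewCentralizer a) (hv0 : v ≠ 0) :
    ∃ u ∈ skewAd L, ⁅v, u⁆ ≠ 0 ∧ ∃ χ : skewCentralizer a → ℝ,
      ∀ p : skewCentralizer a, ⁅(p : L), ⁅a, u⁆⁆ = χ p • u := by
  let T (p : skewCentralizer a) : skewAd L →ₗ[ℝ] skewAd L :=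
    (adL (p : L) * adL a).toLinearMap.restrict fun _ hx =>
      lie_mem_skewAd p.2.1 (lie_mem_skewAd ha hx)
  have hT p : (T p).IsSymmetric := fun x y => by
    change inner ℝ ⁅(p : L), ⁅a, (x : L)⁆⁆ (y : L) = inner ℝ (x : L) ⁅(p : L), ⁅a, (y : L)⁆⁆
    rw [mem_skewAd_iff.1 p.2.1, mem_skewAd_iff.1 ha, neg_neg, lie_lie_comm_of_lie_eq_zero p.2.2]
  have hcomm p q : Commute (T p) (T q) := LinearMap.ext fun x => Subtype.ext <| by
    change ⁅(p : L), ⁅a, ⁅(q : L), ⁅a, (x : L)⁆⁆⁆⁆ = ⁅(q : L), ⁅a, ⁅(p : L), ⁅a, (x : L)⁆⁆⁆⁆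
    rw [lie_lie_comm_of_lie_eq_zero p.2.2, lie_lie_comm_of_lie_eq_zero q.2.2,
      lie_lie_comm_of_lie_eq_zero (hab _ p.2 _ q.2)]
  have hf : (adL v).toLinearMap ∘ₗ (skewAd L).subtype ≠ 0 := fun h =>
    hv0 <| hcenter v hv.1 fun y hy => congr($h ⟨y, hy⟩)
  obtain ⟨u, hu, χ, hχ⟩ := exists_joint_eigenvector_map_ne_zero hT hcomm hf
  exact ⟨u, u.2, hu, χ, fun p => congr(($(hχ p) : L))⟩

/-- Up to scale, `p ↦ b` is a root not vanishing at `v`, with root plane spanned by `u` and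
`⁅a, u⁆`. -/
lemma exists_root_vector (ha : a ∈ skewAd L)
    (hab : ∀ x ∈ skewCentralizer a, ∀ y ∈ skewCentralizer a, ⁅x, y⁆ = 0)
    (hcenter : ∀ x ∈ skewAd L, (∀ y ∈ skewAd L, ⁅x, y⁆ = 0) → x = 0)
    {v : L} (hv : v ∈ skewCentralizer a) (hv0 : v ≠ 0) :
    ∃ u ∈ skewAd L, ⁅v, u⁆ ≠ 0 ∧ ⁅u, ⁅a, u⁆⁆ ∈ skewCentralizer a ∧
      ∀ p ∈ skewCentralizer a, ∃ b : ℝ, ⁅p, u⁆ = b • ⁅a, u⁆ := by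
  obtain ⟨u, hu, hvu, χ, hχ⟩ := exists_eigenvector_lie_lie ha hab hcenter hv hv0
  let a' : skewCentralizer a := ⟨a, self_mem_skewCentralizer ha⟩
  have hau : ⁅a, u⁆ ≠ 0 := fun h => hvu (hab v hv u ⟨hu, h⟩)
  have hχa : χ a' ≠ 0 := fun h => hau <| by
    have hinner := mem_skewAd_iff.1 ha ⁅a, u⁆ u
    rw [hχ a', h, zero_smul, inner_zero_left, eq_comm, neg_eq_zero] at hinner
    exact inner_self_eq_zero.1 hinner
  refine ⟨u, hu, hvu, ⟨lie_mem_skewAd hu (lie_mem_skewAd ha hu), ?_⟩, fun p hp =>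
    ⟨χ ⟨p, hp⟩ / χ a', ?_⟩⟩
  · change ⁅a, ⁅u, ⁅a, u⁆⁆⁆ = 0
    rw [leibniz_lie, lie_self, hχ a', lie_smul, lie_self, smul_zero, add_zero]
  · have hscaled : χ a' • ⁅p, u⁆ = χ ⟨p, hp⟩ • ⁅a, u⁆ := by
      rw [← lie_smul, ← hχ a', lie_lie_comm_of_lie_eq_zero (hab p hp a a'.2), hχ ⟨p, hp⟩, lie_smul]
    rw [div_eq_inv_mul, mul_smul, ← hscaled, inv_smul_smul₀ hχa]

lemma inner_lie_of_lie_eq_smul {p u w : L} {b : ℝ} (hu : u ∈ skewAd L) (hp : ⁅p, u⁆ = b • w) :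
    inner ℝ ⁅u, w⁆ p = b * ‖w‖ ^ 2 := by
  rw [mem_skewAd_iff.1 hu, ← lie_skew, hp, inner_neg_right, neg_neg, inner_smul_right,
    real_inner_self_eq_norm_sq]

lemma exists_normalized_root_vector (ha : a ∈ skewAd L)
    (hab : ∀ x ∈ skewCentralizer a, ∀ y ∈ skewCentralizer a, ⁅x, y⁆ = 0)
    (hcenter : ∀ x ∈ skewAd L, (∀ y ∈ skewAd L, ⁅x, y⁆ = 0) → x = 0)
    {v : L} (hv : v ∈ skewCentralizer a) (hv0 : v ≠ 0) :
    ∃ u ∈ skewAd L, ⁅v, u⁆ ≠ 0 ∧ ⁅u, ⁅a, u⁆⁆ ∈ skewCentralizer a ∧ ⁅⁅u, ⁅a, u⁆⁆, u⁆ = ⁅a, u⁆ ∧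
      ∀ p ∈ skewCentralizer a, ∃ b : ℝ, ⁅p, u⁆ = b • ⁅a, u⁆ := by
  obtain ⟨u, hu, hvu, ht, hroot⟩ := exists_root_vector ha hab hcenter hv hv0
  obtain ⟨b, hb⟩ := hroot v hv
  obtain ⟨s, hs⟩ := hroot _ ht
  have hw : ⁅a, u⁆ ≠ 0 := fun h => hvu (by rw [hb, h, smul_zero])
  have hb0 : b ≠ 0 := fun h => hvu (by rw [hb, h, zero_smul])
  have ht0 : ⁅u, ⁅a, u⁆⁆ ≠ 0 := fun h => by
    have hinner := inner_lie_of_lie_eq_smul hu hb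
    rw [h, inner_zero_left, eq_comm] at hinner
    simp [hb0, hw] at hinner
  have hs0 : 0 < s := by
    have hinner := inner_lie_of_lie_eq_smul hu hs
    rw [real_inner_self_eq_norm_sq] at hinner
    exact pos_of_mul_pos_left (hinner ▸ by positivity) (sq_nonneg ‖⁅a, u⁆‖)
  have hscale : (√s)⁻¹ * ((√s)⁻¹ * s) = 1 := by
    field_simp
    exact (Real.sq_sqrt hs0.le).symm
  refine ⟨(√s)⁻¹ • u, Submodule.smul_mem _ _ hu, ?_, ?_, ?_, fun p hp => ?_⟩
  · simpa [hs0.ne', Real.sqrt_ne_zero'.2 hs0] using hvu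
  · simpa only [lie_smul, smul_lie] using Submodule.smul_mem _ _ (Submodule.smul_mem _ _ ht)
  · simp only [lie_smul, smul_lie, hs, smul_smul, mul_assoc, hscale, mul_one]
  · obtain ⟨b, hb⟩ := hroot p hp
    exact ⟨b, by rw [lie_smul, lie_smul, hb, smul_comm]⟩

/-- Here `u` is `π` times a normalized root vector. -/
lemma exists_exp_adL_eq_reflection (ha : a ∈ skewAd L)
    (hab : ∀ x ∈ skewCentralizer a, ∀ y ∈ skewCentralizer a, ⁅x, y⁆ = 0)
    (hcenter : ∀ x ∈ skewAd L, (∀ y ∈ skewAd L, ⁅x, y⁆ = 0) → x = 0)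
    {v : skewCentralizer a} (hv0 : v ≠ 0) :
    ∃ t : skewCentralizer a, inner ℝ t v ≠ 0 ∧ ∃ u ∈ skewAd L, ∀ p : skewCentralizer a,
      exp (adL u) (p : L) = ((ℝ ∙ t)ᗮ.reflection p : skewCentralizer a) := by
  obtain ⟨u, hu, hvu, ht, htu, hroot⟩ := exists_normalized_root_vector ha hab hcenter v.2
    (Subtype.coe_ne_coe.2 hv0)
  obtain ⟨b, hb⟩ := hroot v v.2
  have hw : ⁅a, u⁆ ≠ 0 := fun h => hvu (by rw [hb, h, smul_zero])
  have hb0 : b ≠ 0 := fun h => hvu (by rw [hb, h, zero_smul])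
  have hnorm : ‖⁅u, ⁅a, u⁆⁆‖ ^ 2 = ‖⁅a, u⁆‖ ^ 2 := by
    rw [← real_inner_self_eq_norm_sq, inner_lie_of_lie_eq_smul hu (b := 1) (by rw [htu, one_smul]),
      one_mul]
  refine ⟨⟨_, ht⟩, ?_, Real.pi • u, Submodule.smul_mem _ _ hu, fun p => ?_⟩
  · rw [Submodule.coe_inner, inner_lie_of_lie_eq_smul hu hb]
    positivity
  · obtain ⟨d, hd⟩ := hroot p p.2
    rw [map_smul, exp_pi_smul_apply (v := ⁅a, u⁆) (t := ⁅u, ⁅a, u⁆⁆) (b := d) rfl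
      (by rw [adL_apply, ← lie_skew, htu]) (by rw [adL_apply, ← lie_skew, hd]),
      reflection_orthogonal_span_singleton_apply]
    simp only [Submodule.coe_inner, Submodule.coe_norm, AddSubgroupClass.coe_sub,
      Submodule.coe_smul]
    rw [inner_lie_of_lie_eq_smul hu hd, hnorm, mul_div_cancel_right₀ _ (by positivity)]

variable [LieAlgebra.IsKilling ℝ L]

/-- As for a Coxeter element, `w` is a suitable product of root reflections. -/
lemma exists_mem_toralAut_forall_eq_zero (ha : a ∈ skewAd L)
    (hab : ∀ x ∈ skewCentralizer a, ∀ y ∈ skewCentralizer a, ⁅x, y⁆ = 0)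
    (hcenter : ∀ x ∈ skewAd L, (∀ y ∈ skewAd L, ⁅x, y⁆ = 0) → x = 0) :
    ∃ g ∈ toralAut a, ∃ w : skewCentralizer a ≃ₗᵢ[ℝ] skewCentralizer a,
      (∀ p : skewCentralizer a, g p = w p) ∧ ∀ p, w p = p → p = 0 := by
  let T : Set (skewCentralizer a) := {t | ∃ u ∈ skewAd L, ∀ p : skewCentralizer a,
    exp (adL u) (p : L) = ((ℝ ∙ t)ᗮ.reflection p : skewCentralizer a)}
  have hT : Submodule.span ℝ T = ⊤ := by
    refine Submodule.orthogonal_eq_bot_iff.1 <| (Submodule.eq_bot_iff _).2 fun v hv => ?_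
    by_contra hv0
    obtain ⟨t, htv, ht⟩ := exists_exp_adL_eq_reflection ha hab hcenter hv0
    exact htv (hv t (Submodule.subset_span ht))
  obtain ⟨w, hw, hfix⟩ := exists_mem_closure_reflection_forall_eq_zero hT
  suffices ∃ g ∈ toralAut a, ∀ p : skewCentralizer a, g p = w p by
    obtain ⟨g, hg, hgw⟩ := this
    exact ⟨g, hg, w, hgw, hfix⟩
  clear hfix
  induction hw using Submonoid.closure_induction_right with
  | one => exact ⟨1, one_mem_toralAut, fun _ => rfl⟩
  | mul_right w _ s hs ih =>
    obtain ⟨g, hg, hgw⟩ := ih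
    obtain ⟨t, ⟨u, hu, hut⟩, rfl⟩ := hs
    refine ⟨g * exp (adL u), mul_exp_mem_toralAut ha hab hg hu, fun p => ?_⟩
    rw [mul_apply_eq_comp, hut, hgw, LinearIsometryEquiv.coe_mul, Function.comp_apply]

theorem exists_mem_isometryAut_inner_eq_zero (ha : a ∈ skewAd L)
    (hab : ∀ x ∈ skewCentralizer a, ∀ y ∈ skewCentralizer a, ⁅x, y⁆ = 0)
    (hcenter : ∀ x ∈ skewAd L, (∀ y ∈ skewAd L, ⁅x, y⁆ = 0) → x = 0) :
    ∃ c ∈ isometryAut L, ∀ x ∈ skewCentralizer a, ∀ y ∈ skewCentralizer a, inner ℝ (c x) y = 0 := by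
  obtain ⟨g, ⟨hg, c, hc, hcfix⟩, w, hgw, hwfix⟩ := exists_mem_toralAut_forall_eq_zero ha hab hcenter
  refine ⟨c, hc, fun x hx y hy => ?_⟩
  let f : skewCentralizer a →ₗ[ℝ] skewCentralizer a := w.toLinearEquiv.toLinearMap - LinearMap.id
  have hf : Function.Injective f :=
    (injective_iff_map_eq_zero f).2 fun p hp => hwfix p (sub_eq_zero.1 hp)
  obtain ⟨p, hp⟩ := LinearMap.injective_iff_surjective.1 hf ⟨y, hy⟩
  have hy' : g p - p = y := by
    rw [hgw]
    exact congr(($hp : L))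
  calc inner ℝ (c x) y = inner ℝ (c x) (g p) - inner ℝ (c x) (p : L) := by
        rw [← hy', inner_sub_right]
    _ = inner ℝ (g (c x)) (g p) - inner ℝ (c x) (p : L) := by rw [hcfix x hx]
    _ = 0 := by rw [inner_map_map_of_mem hg, sub_self]

end Root

end InnerProductLieAlgebra

section KillingForm

open LieAlgebra

variable {K L : Type*} [Field K] [LieRing L] [LieAlgebra K L] [FiniteDimensional K L]

omit [FiniteDimensional K L] in
lemma isKilling_of_nondegenerate (h : (killingForm K L).Nondegenerate) : IsKilling K L where
  killingCompl_top_eq_bot := by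
    refine (LieSubmodule.eq_bot_iff _).2 fun x hx => h.2 x fun y => ?_
    exact (LieIdeal.mem_killingCompl K L ⊤).1 hx y trivial

variable [IsKilling K L] {a b : L}

variable (K) in
include K in
lemma eq_zero_of_forall_lie_eq_zero {x : L} (hx : ∀ y : L, ⁅x, y⁆ = 0) : x = 0 :=
  (LieDerivation.IsKilling.ad_apply_eq_zero_iff K L x).1 <|
    LieDerivation.ext fun y => by simpa using hx y

variable (K) in
include K in
lemma exists_eq_lie_add_lie (h : ∀ x : L, ⁅a, x⁆ = 0 → ⁅b, x⁆ = 0 → x = 0) (x : L) :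
    ∃ u v : L, x = ⁅a, u⁆ + ⁅b, v⁆ := by
  let S := LinearMap.range (ad K L a : L →ₗ[K] L) ⊔ LinearMap.range (ad K L b : L →ₗ[K] L)
  have hS : (killingForm K L).orthogonal S = ⊥ := by
    refine (Submodule.eq_bot_iff _).2 fun y hy => ?_
    have lie_eq_zero {c : L} (hc : ∀ z, ⁅c, z⁆ ∈ S) : ⁅c, y⁆ = 0 := by
      refine (IsKilling.killingForm_nondegenerate K L).2 _ fun z => ?_
      rw [← neg_eq_zero, ← LieModule.traceForm_apply_lie_apply']
      exact hy _ (hc z)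
    exact h y (lie_eq_zero fun z => Submodule.mem_sup_left ⟨z, rfl⟩)
      (lie_eq_zero fun z => Submodule.mem_sup_right ⟨z, rfl⟩)
  have hx : x ∈ S := by
    rw [← LinearMap.BilinForm.orthogonal_orthogonal (IsKilling.killingForm_nondegenerate K L)
      (LieModule.traceForm_isSymm K L L).isRefl S, hS]
    simp
  obtain ⟨_, ⟨u, rfl⟩, _, ⟨v, rfl⟩, huv⟩ := Submodule.mem_sup.1 hx
  exact ⟨u, v, huv.symm⟩

lemma forall_killingForm_lie_eq_neg_iff (θ : L ≃ₗ⁅K⁆ L) {x : L} :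
    (∀ y z : L, killingForm K L ⁅x, y⁆ (θ z) = -killingForm K L y (θ ⁅x, z⁆)) ↔ θ x = x := by
  simp only [killingForm, LieModule.traceForm_apply_lie_apply', θ.map_lie, neg_inj]
  refine ⟨fun h => sub_eq_zero.1 ?_, fun h y z => by rw [h]⟩
  refine eq_zero_of_forall_lie_eq_zero K fun w => ?_
  refine (IsKilling.killingForm_nondegenerate K L).2 _ fun y => ?_
  have hyw := h y (θ.symm w)
  rw [θ.apply_symm_apply] at hyw
  rw [sub_lie, map_sub, killingForm, hyw, sub_self]

end KillingForm

section IsRegular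

open LieAlgebra LieSubalgebra

variable {K L : Type*} [Field K] [LieRing L] [LieAlgebra K L] [FiniteDimensional K L] {a : L}

omit [FiniteDimensional K L] in
lemma mem_engel_of_lie_eq_zero {x : L} (h : ⁅a, x⁆ = 0) : x ∈ engel K a :=
  (mem_engel_iff K a x).2 ⟨1, by simpa using h⟩

lemma isCartanSubalgebra_engel_of_isRegular [Infinite K] (ha : IsRegular K a) :
    (engel K a).IsCartanSubalgebra := by
  have hcard : (finrank K L : Cardinal) ≤ Cardinal.mk K :=
    Cardinal.natCast_le_aleph0.trans (Cardinal.infinite_iff.1 ‹Infinite K›)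
  refine ⟨isNilpotent_of_forall_le_engel _ fun x hx => ?_, normalizer_engel _ _⟩
  refine engel_isBot_of_isMin hcard (engel K a) ⟨_, a, self_mem_engel _ _, rfl⟩ le_rfl ?_
    ⟨engel K x, x, hx, rfl⟩
  rintro ⟨_, y, -, rfl⟩ (hya : engel K y ≤ engel K a)
  refine (toSubmodule_injective <| Submodule.eq_of_le_of_finrank_le hya ?_).ge
  exact ((isRegular_iff_finrank_engel_eq_rank K a).1 ha).trans_le (rank_le_finrank_engel K y)

lemma lie_eq_zero_of_isRegular [CharZero K] [IsKilling K L] (ha : IsRegular K a) {x y : L}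
    (hx : ⁅a, x⁆ = 0) (hy : ⁅a, y⁆ = 0) : ⁅x, y⁆ = 0 := by
  have := isCartanSubalgebra_engel_of_isRegular ha
  exact congr_arg Subtype.val <| trivial_lie_zero (engel K a) (engel K a)
    ⟨x, mem_engel_of_lie_eq_zero hx⟩ ⟨y, mem_engel_of_lie_eq_zero hy⟩

lemma engel_le_of_isRegular {k : LieSubalgebra K L} (hrank : rank K k = rank K L) (hak : a ∈ k)
    (ha : IsRegular K a) : engel K a ≤ k := by
  let E : Submodule K L := (engel K (⟨a, hak⟩ : k)).toSubmodule.map k.subtype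
  have hE : E ≤ (engel K a).toSubmodule := by
    rintro _ ⟨x, hx, rfl⟩
    obtain ⟨n, hn⟩ := (mem_engel_iff K (⟨a, hak⟩ : k) x).1 hx
    exact (mem_engel_iff K a _).2 ⟨n, by simpa [hn] using (coe_ad_pow K L k ⟨a, hak⟩ x n).symm⟩
  have hfinrank : finrank K (engel K a) ≤ finrank K E := by
    rw [(isRegular_iff_finrank_engel_eq_rank K a).1 ha, ← hrank,
      Submodule.finrank_map_subtype_eq]
    exact rank_le_finrank_engel K (⟨a, hak⟩ : k)
  intro x hx
  obtain ⟨y, -, rfl⟩ := (Submodule.eq_of_le_of_finrank_le hE hfinrank).ge hx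
  exact y.2

lemma isRegular_map (e : L ≃ₗ⁅K⁆ L) (ha : IsRegular K a) : IsRegular K (e a) := by
  rwa [isRegular_def, ← conj_ad_apply, LinearEquiv.charpoly_conj]

end IsRegular

section CartanInvolution

variable {L : Type*} [LieRing L] [LieAlgebra ℝ L] [FiniteDimensional ℝ L] {θ : L ≃ₗ⁅ℝ⁆ L} {a : L}

theorem exists_equiv_killingForm_eq_zero [LieAlgebra.IsKilling ℝ L]
    (hinv : ∀ x : L, θ (θ x) = x)
    (hpos : ∀ x : L, x ≠ 0 → 0 < -(killingForm ℝ L x (θ x)))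
    (hcenter : ∀ x : L, θ x = x → (∀ y : L, θ y = y → ⁅x, y⁆ = 0) → x = 0)
    (hfix : ∀ x : L, ⁅a, x⁆ = 0 → θ x = x)
    (hab : ∀ x y : L, ⁅a, x⁆ = 0 → ⁅a, y⁆ = 0 → ⁅x, y⁆ = 0) :
    ∃ c : L ≃ₗ⁅ℝ⁆ L, θ (c a) = c a ∧
      ∀ x y : L, ⁅a, x⁆ = 0 → ⁅a, y⁆ = 0 → killingForm ℝ L (c x) y = 0 := by
  let B : LinearMap.BilinForm ℝ L := -((killingForm ℝ L).compl₂ θ.toLinearMap)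
  have hB (x y : L) : B x y = -killingForm ℝ L x (θ y) := rfl
  have hsymm : B.IsSymm := ⟨fun x y => by
    simp only [hB]
    rw [← LieAlgebra.killingForm_of_equiv_apply θ x, hinv, LieModule.traceForm_comm]⟩
  let : InnerProductLieAlgebra L := .ofBilinForm B hsymm hpos
  have hmem {x : L} : x ∈ InnerProductLieAlgebra.skewAd L ↔ θ x = x := by
    rw [InnerProductLieAlgebra.mem_skewAd_iff, ← forall_killingForm_lie_eq_neg_iff]
    exact forall₂_congr fun y z => neg_inj
  have hcentralizer {x : L} (hx : ⁅a, x⁆ = 0) : x ∈ InnerProductLieAlgebra.skewCentralizer a :=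
    ⟨hmem.2 (hfix x hx), hx⟩
  obtain ⟨c, hc, horth⟩ := InnerProductLieAlgebra.exists_mem_isometryAut_inner_eq_zero
    (hmem.2 (hfix a (lie_self a))) (fun x hx y hy => hab x y hx.2 hy.2)
    (fun x hx h => hcenter x (hmem.1 hx) fun y hy => h y (hmem.2 hy))
  refine ⟨InnerProductLieAlgebra.toLieEquiv hc,
    hmem.1 (InnerProductLieAlgebra.map_mem_skewAd hc (hmem.2 (hfix a (lie_self a)))),
    fun x y hx hy => ?_⟩
  have hxy : B (c x) y = 0 := horth x (hcentralizer hx) y (hcentralizer hy)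
  rwa [hB, hfix y hy, neg_eq_zero] at hxy

end CartanInvolution

/-- For a non-Hermitian real semisimple Lie algebra of full rank (Cartan involution `θ` with
semisimple fixed subalgebra `𝔨` of the same rank as `L`): for every regular element `a` of `L`
lying in `𝔨`, there is a regular element `b` of `L` in `𝔨` with `L = ⁅a, L⁆ + ⁅b, L⁆`,
`κ(a, b) = 0`, and the centralizers of `a` and `b` orthogonal. -/
theorem nonhermitian_full_rank (L : Type*) [LieRing L] [LieAlgebra ℝ L] [FiniteDimensional ℝ L]
    (hnd : (killingForm ℝ L).Nondegenerate)
    (θ : L ≃ₗ⁅ℝ⁆ L) (hinv : ∀ x : L, θ (θ x) = x)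
    (hpos : ∀ x : L, x ≠ 0 → 0 < -(killingForm ℝ L x (θ x)))
    (k : LieSubalgebra ℝ L) (hk : ∀ x : L, x ∈ k ↔ θ x = x)
    (hknd : (killingForm ℝ k).Nondegenerate)
    (hrank : LieAlgebra.rank ℝ k = LieAlgebra.rank ℝ L)
    (a : L) (hak : a ∈ k) (ha : LieAlgebra.IsRegular ℝ a) :
    ∃ b : L, b ∈ k ∧ LieAlgebra.IsRegular ℝ b ∧
      (∀ x : L, ∃ u v : L, x = ⁅a, u⁆ + ⁅b, v⁆) ∧
      killingForm ℝ L a b = 0 ∧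
      (∀ x y : L, ⁅a, x⁆ = 0 → ⁅b, y⁆ = 0 → killingForm ℝ L x y = 0) := by
  have : LieAlgebra.IsKilling ℝ L := isKilling_of_nondegenerate hnd
  have : LieAlgebra.IsKilling ℝ k := isKilling_of_nondegenerate hknd
  have hfix (x : L) (hx : ⁅a, x⁆ = 0) : θ x = x :=
    (hk x).1 <| engel_le_of_isRegular hrank hak ha (mem_engel_of_lie_eq_zero hx)
  have hcenter (x : L) (hx : θ x = x) (h : ∀ y : L, θ y = y → ⁅x, y⁆ = 0) : x = 0 := by
    refine congr_arg Subtype.val <| eq_zero_of_forall_lie_eq_zero ℝ (x := ⟨x, (hk x).2 hx⟩)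
      fun y : k => Subtype.ext (h y ((hk y).1 y.2))
  obtain ⟨c, hca, hc⟩ := exists_equiv_killingForm_eq_zero hinv hpos hcenter hfix
    fun x y => lie_eq_zero_of_isRegular ha
  have horth (x y : L) (hx : ⁅a, x⁆ = 0) (hy : ⁅c a, y⁆ = 0) : killingForm ℝ L x y = 0 := by
    have hy' : ⁅a, c.symm y⁆ = 0 := c.injective (by simpa [c.map_lie] using hy)
    simpa [LieModule.traceForm_comm ℝ L L x] using hc _ x hy' hx
  refine ⟨c a, (hk _).2 hca, isRegular_map c ha, exists_eq_lie_add_lie ℝ fun x hx hbx => ?_,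
    horth a (c a) (lie_self _) (lie_self _), horth⟩
  by_contra hx0
  exact (hpos x hx0).ne' (by rw [hfix x hx, horth x x hx hbx, neg_zero])
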